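/- The permutation shelf: on the group Perm(ℕ) of permutations of ℕ, define the shift group endomorphism sh by sh(f)(0) = 0 and sh(f)(n+1) = f(n) + 1, and define f ▷ g := f ∘ sh(g) ∘ (swap 0 1) ∘ sh(f)⁻¹. Then ▷ obeys the left selfdistributivity law f ▷ (g ▷ h) = (f ▷ g) ▷ (f ▷ h) for all f, g, h ∈ Perm(ℕ); moreover, the group homomorphism perm : B_∞ → Perm(ℕ) determined by perm(σ_i) = swap(i−1, i) satisfies perm(β₁ ▷ β₂) = perm(β₁) ▷ perm(β₂) for all β₁, β₂ ∈ B_∞. -/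

import Mathlib

/-- The braid relations on generators indexed by `ℕ` (generator `i` stands for
the Artin generator `σ_{i+1}` of the paper). -/
def braidRels : Set (FreeGroup ℕ) :=
  {r | (∃ i j : ℕ, i + 2 ≤ j ∧
          r = .of i * .of j * (.of i)⁻¹ * (.of j)⁻¹) ∨
       (∃ i : ℕ,
          r = .of i * .of (i + 1) * .of i *
              (.of (i + 1) * .of i * .of (i + 1))⁻¹)}

/-- The braid group on infinitely many strands. -/
abbrev Binf : Type := PresentedGroup braidRels

/-- `σ i` is the Artin generator `σ_{i+1}` of the paper (0-indexed). -/
def σ (i : ℕ) : Binf := PresentedGroup.of i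

lemma mk_rel_eq_one {r : FreeGroup ℕ} (h : r ∈ braidRels) :
    PresentedGroup.mk braidRels r = 1 :=
  (QuotientGroup.eq_one_iff r).mpr (Subgroup.subset_normalClosure h)

lemma shift_lift_eq_one :
    ∀ r ∈ braidRels, FreeGroup.lift (fun n => σ (n + 1)) r = 1 := by
  intro r hr
  have key : ∀ s ∈ braidRels, FreeGroup.lift (fun n => σ (n + 1)) s
      = PresentedGroup.mk braidRels (FreeGroup.map (· + 1) s) := by
    intro s _
    have : (FreeGroup.lift (fun n => σ (n + 1)) : FreeGroup ℕ →* Binf)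
        = (PresentedGroup.mk braidRels).comp (FreeGroup.map (· + 1)) := by
      apply FreeGroup.ext_hom
      intro x
      simp [σ, PresentedGroup.of]
    rw [this]; rfl
  rw [key r hr]
  apply mk_rel_eq_one
  rcases hr with ⟨i, j, hij, rfl⟩ | ⟨i, rfl⟩
  · exact Or.inl ⟨i + 1, j + 1, by omega, by simp⟩
  · exact Or.inr ⟨i + 1, by simp⟩

/-- The shift endomorphism of the braid group, mapping `σ i` to `σ (i+1)`. -/
def sh : Binf →* Binf := PresentedGroup.toGroup shift_lift_eq_one

@[simp] lemma sh_σ (i : ℕ) : sh (σ i) = σ (i + 1) :=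
  PresentedGroup.toGroup.of shift_lift_eq_one

/-- The shifted-conjugation (selfdistributive) operation on `Binf`:
`β₁ ▷ β₂ = β₁ · sh β₂ · σ₁ · (sh β₁)⁻¹`. -/
def sc (β₁ β₂ : Binf) : Binf := β₁ * sh β₂ * σ 0 * (sh β₁)⁻¹

/-- The underlying function of the shift of a permutation of `ℕ`. -/
def shFunP (f : ℕ → ℕ) : ℕ → ℕ
  | 0 => 0
  | n + 1 => f n + 1

/-- The shift endomorphism of `Equiv.Perm ℕ`: `shP f 0 = 0` and
`shP f (n+1) = f n + 1`. -/
def shP (f : Equiv.Perm ℕ) : Equiv.Perm ℕ where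
  toFun := shFunP f
  invFun := shFunP f.symm
  left_inv n := by cases n <;> simp [shFunP]
  right_inv n := by cases n <;> simp [shFunP]

/-- Shifted conjugation on permutations of `ℕ`:
`f ▷ g = f ∘ sh g ∘ (swap 0 1) ∘ (sh f)⁻¹`
(the paper's 1-indexed `s₁ = swap 1 2` is `swap 0 1` in 0-indexed form). -/
def scP (f g : Equiv.Perm ℕ) : Equiv.Perm ℕ :=
  f * shP g * Equiv.swap 0 1 * (shP f)⁻¹

lemma shP_zero (f : Equiv.Perm ℕ) : shP f 0 = 0 := rfl

lemma shP_succ (f : Equiv.Perm ℕ) (n : ℕ) : shP f (n + 1) = f n + 1 := rfl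

lemma shP_mul (f g : Equiv.Perm ℕ) : shP (f * g) = shP f * shP g := by
  ext n
  cases n <;> rfl

/-- The shift as a monoid homomorphism. -/
def shPHom : Equiv.Perm ℕ →* Equiv.Perm ℕ := MonoidHom.mk' shP shP_mul

lemma shP_inv (f : Equiv.Perm ℕ) : shP f⁻¹ = (shP f)⁻¹ := map_inv shPHom f

lemma shP_swap (i j : ℕ) : shP (Equiv.swap i j) = Equiv.swap (i + 1) (j + 1) := by
  ext n
  cases n with
  | zero => rw [shP_zero, Equiv.swap_apply_of_ne_of_ne] <;> omega
  | succ n =>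
    rw [shP_succ, Equiv.swap_apply_def, Equiv.swap_apply_def]
    split_ifs <;> omega

lemma swap_comm_shP (f : Equiv.Perm ℕ) :
    Equiv.swap 0 1 * shP (shP f) = shP (shP f) * Equiv.swap 0 1 := by
  ext n
  rcases n with _ | _ | n
  · simp [shP_zero]; rfl
  · simp [shP_zero]; rfl
  · have h : Equiv.swap 0 1 (n + 1 + 1) = n + 1 + 1 := by
      apply Equiv.swap_apply_of_ne_of_ne <;> omega
    rw [Equiv.Perm.mul_apply, Equiv.Perm.mul_apply, h, shP_succ, shP_succ]
    rw [Equiv.swap_apply_of_ne_of_ne] <;> omega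

lemma swap_far (i j : ℕ) (h : i + 2 ≤ j) :
    Equiv.swap i (i + 1) * Equiv.swap j (j + 1)
      = Equiv.swap j (j + 1) * Equiv.swap i (i + 1) := by
  ext n
  simp only [Equiv.Perm.mul_apply, Equiv.swap_apply_def]
  grind

lemma swap_braid (i : ℕ) :
    Equiv.swap i (i + 1) * Equiv.swap (i + 1) (i + 1 + 1) * Equiv.swap i (i + 1)
      = Equiv.swap (i + 1) (i + 1 + 1) * Equiv.swap i (i + 1)
        * Equiv.swap (i + 1) (i + 1 + 1) := by
  ext n
  simp only [Equiv.Perm.mul_apply, Equiv.swap_apply_def]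
  grind

lemma perm_lift_eq_one :
    ∀ r ∈ braidRels, FreeGroup.lift (fun n => Equiv.swap n (n + 1)) r = 1 := by
  rintro r (⟨i, j, hij, rfl⟩ | ⟨i, rfl⟩)
  · simp only [map_mul, map_inv, FreeGroup.lift_apply_of]
    rw [swap_far i j hij]
    group
  · simp only [map_mul, map_inv, FreeGroup.lift_apply_of]
    rw [swap_braid i, mul_inv_cancel]

/-- The projection from braids to permutations. -/
def permHom : Binf →* Equiv.Perm ℕ := PresentedGroup.toGroup perm_lift_eq_one

lemma permHom_σ (i : ℕ) : permHom (σ i) = Equiv.swap i (i + 1) :=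
  PresentedGroup.toGroup.of perm_lift_eq_one

lemma permHom_sh (β : Binf) : permHom (sh β) = shP (permHom β) := by
  have h : permHom.comp sh = shPHom.comp permHom := by
    apply PresentedGroup.ext
    intro i
    change permHom (sh (σ i)) = shP (permHom (σ i))
    rw [sh_σ, permHom_σ, permHom_σ, shP_swap]
  exact DFunLike.congr_fun h β

lemma scP_self_distrib (f g h : Equiv.Perm ℕ) :
    scP f (scP g h) = scP (scP f g) (scP f h) := by
  have hc := swap_comm_shP
  have hb := swap_braid 0
  rw [← shP_swap 0 (0 + 1)] at hb
  simp only [zero_add] at hb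
  simp only [scP, shP_mul, shP_inv]
  generalize Equiv.swap 0 1 = s at *
  have c1 := hc h
  have c2 := hc f
  have c3 := hc g
  generalize shP (shP f) = F at *
  generalize shP (shP g) = G at *
  generalize shP (shP h) = H at *
  generalize shP s = t at *
  have e1 : F⁻¹ * s * F = s := by rw [mul_assoc, c2]; group
  have e2 : G⁻¹ * s = s * G⁻¹ := by
    rw [inv_mul_eq_iff_eq_mul, ← mul_assoc, ← c3]; group
  have e3 : s * t * s * t⁻¹ = t * s := by rw [hb]; group
  calc f * (shP g * H * t * G⁻¹) * s * (shP f)⁻¹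
      = f * shP g * H * t * (G⁻¹ * s) * (shP f)⁻¹ := by group
    _ = f * shP g * H * (t * s) * G⁻¹ * (shP f)⁻¹ := by rw [e2]; group
    _ = f * shP g * (H * s) * t * s * t⁻¹ * G⁻¹ * (shP f)⁻¹ := by rw [← e3]; group
    _ = f * shP g * s * H * t * (F⁻¹ * s * F) * t⁻¹ * G⁻¹ * (shP f)⁻¹ := by
        rw [← c1, e1]; group
    _ = _ := by group

/-- the permutation shelf. The operation `scP` obeys the left
selfdistributivity law, and the group homomorphism `perm : Binf →* Perm ℕ`
determined by `perm (σ i) = swap i (i+1)` (0-indexed) is a shelf morphism. -/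
theorem permutation_shelf :
    (∀ f g h : Equiv.Perm ℕ, scP f (scP g h) = scP (scP f g) (scP f h)) ∧
    ∃ perm : Binf →* Equiv.Perm ℕ,
      (∀ i : ℕ, perm (σ i) = Equiv.swap i (i + 1)) ∧
      ∀ β₁ β₂ : Binf, perm (sc β₁ β₂) = scP (perm β₁) (perm β₂) := by
  refine ⟨scP_self_distrib, permHom, permHom_σ, fun β₁ β₂ => ?_⟩
  simp only [sc, scP, map_mul, map_inv, permHom_sh, permHom_σ, zero_add]
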